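/- Let $(A_m)_{m\in\mathbb{Z}}$ be a uniformly bounded sequence of invertible bounded operators on a Banach space $X$ admitting an exponential dichotomy, and let $(g_n)$ be maps with $\sup_n\sup_x\|g_n(x)\|\le\delta$ with appropriate smallness and smoothness conditions. If $(y_n)_{n\in\mathbb{Z}}$ is a solution of $y_{n+1}=A_ny_n+g_n(y_n)$ with $\lambda:=\limsup_{n\to\infty}\frac{1}{n}\log\|y_n\|>0$, then there exists a solution $(x_n)$ of the linear equation $x_{n+1}=A_nx_n$ with $\limsup_{n\to\infty}\frac{1}{n}\log\|x_n\|=\lambda$. -/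

import Mathlib

/-- The sequence `A` of bounded operators admits an exponential dichotomy: there exist
an evolution family `E`, projections `P` commuting with the dynamics and constants
`C, lam > 0` with the usual exponential bounds. -/
def ExpDichotomy {X : Type*} [NormedAddCommGroup X] [NormedSpace ℝ X]
    (A : ℤ → X →L[ℝ] X) : Prop :=
  ∃ (E : ℤ → ℤ → X →L[ℝ] X) (P : ℤ → X →L[ℝ] X) (C lam : ℝ),
    0 < C ∧ 0 < lam ∧
    (∀ n, E n n = ContinuousLinearMap.id ℝ X) ∧
    (∀ m n, E (m + 1) n = (A m).comp (E m n)) ∧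
    (∀ m, (P m).comp (P m) = P m) ∧
    (∀ m, (P (m + 1)).comp (A m) = (A m).comp (P m)) ∧
    (∀ m n, n ≤ m → ‖(E m n).comp (P n)‖ ≤ C * Real.exp (-lam * ((m - n : ℤ) : ℝ))) ∧
    (∀ m n, m ≤ n → ‖(E m n).comp (ContinuousLinearMap.id ℝ X - P n)‖ ≤
      C * Real.exp (-lam * ((n - m : ℤ) : ℝ)))

open Filter

/-- Adding a bounded perturbation to a sequence does not raise its exponential growth above any
positive rate. -/
theorem eventually_log_norm_div_le_of_norm_sub_le {X : Type*} [NormedAddCommGroup X]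
    {x y : ℤ → X} {K a b : ℝ} (hK : ∀ n, ‖y n - x n‖ ≤ K) (ha : 0 < a) (hab : a < b)
    (h : ∀ᶠ n : ℤ in atTop, Real.log ‖y n‖ / (n : ℝ) ≤ a) :
    ∀ᶠ n : ℤ in atTop, Real.log ‖x n‖ / (n : ℝ) ≤ b := by
  have hlim : Tendsto (fun n : ℤ => Real.exp ((b - a) * (n : ℝ))) atTop atTop :=
    Real.tendsto_exp_atTop.comp
      (tendsto_intCast_atTop_atTop.const_mul_atTop (sub_pos.2 hab))
  filter_upwards [h, hlim.eventually_ge_atTop (1 + K), eventually_gt_atTop 0] with n hn hexp hpos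
  have hn0 : (0 : ℝ) < n := by exact_mod_cast hpos
  have hK0 : 0 ≤ K := (norm_nonneg _).trans (hK n)
  have hy : ‖y n‖ ≤ Real.exp (a * n) := by
    rcases (norm_nonneg (y n)).eq_or_lt with h0 | h0
    · rw [← h0]; positivity
    · exact (Real.log_le_iff_le_exp h0).1 ((div_le_iff₀ hn0).1 hn)
  have hx : ‖x n‖ ≤ Real.exp (b * n) := by
    have h1 : ‖x n‖ ≤ ‖y n‖ + K := by
      have := norm_sub_norm_le (x n) (y n)
      rw [norm_sub_rev] at this
      linarith [hK n]
    have h2 : Real.exp (b * n) = Real.exp (a * n) * Real.exp ((b - a) * n) := by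
      rw [← Real.exp_add]; ring_nf
    have h3 : 1 ≤ Real.exp (a * n) := Real.one_le_exp (by positivity)
    rw [h2]
    nlinarith
  rw [div_le_iff₀ hn0]
  rcases (norm_nonneg (x n)).eq_or_lt with h0 | h0
  · rw [← h0, Real.log_zero]
    have : 0 < b := ha.trans hab
    positivity
  · exact (Real.log_le_iff_le_exp h0).2 hx

/-- Sequences at bounded distance from each other have the same upper Lyapunov exponent as soon
as one of the exponents is positive. -/
theorem limsup_log_norm_div_eq_of_norm_sub_le {X : Type*} [NormedAddCommGroup X]
    {x y : ℤ → X} {K lam : ℝ} (hK : ∀ n, ‖y n - x n‖ ≤ K) (hlam : 0 < lam)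
    (h : limsup (fun n : ℤ => Real.log ‖y n‖ / (n : ℝ)) atTop = lam) :
    limsup (fun n : ℤ => Real.log ‖x n‖ / (n : ℝ)) atTop = lam := by
  have hK' : ∀ n, ‖x n - y n‖ ≤ K := fun n => by rw [norm_sub_rev]; exact hK n
  rw [limsup_eq] at h ⊢
  have hne : {a : ℝ | ∀ᶠ n : ℤ in atTop, Real.log ‖y n‖ / (n : ℝ) ≤ a}.Nonempty := by
    by_contra hempty
    rw [Set.not_nonempty_iff_eq_empty.1 hempty, Real.sInf_empty] at h
    exact hlam.ne h
  have hbdd : BddBelow {a : ℝ | ∀ᶠ n : ℤ in atTop, Real.log ‖y n‖ / (n : ℝ) ≤ a} := by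
    by_contra hunb
    rw [Real.sInf_of_not_bddBelow hunb] at h
    exact hlam.ne h
  have hge : ∀ a : ℝ, (∀ᶠ n : ℤ in atTop, Real.log ‖y n‖ / (n : ℝ) ≤ a) → lam ≤ a :=
    fun a ha => h ▸ csInf_le hbdd ha
  have hmem : ∀ b, lam < b → ∀ᶠ n : ℤ in atTop, Real.log ‖x n‖ / (n : ℝ) ≤ b := by
    intro b hb
    obtain ⟨a, ha, hab⟩ := exists_lt_of_csInf_lt hne (h.trans_lt hb)
    exact eventually_log_norm_div_le_of_norm_sub_le hK (hlam.trans_le (hge a ha)) hab ha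
  refine csInf_eq_of_forall_ge_of_forall_gt_exists_lt ⟨lam + 1, hmem _ (by linarith)⟩ ?_ ?_
  · intro b hb
    by_contra! hlt
    obtain ⟨d, hd, hdlam⟩ := exists_between (max_lt hlt (half_lt_self hlam))
    refine absurd (hge d ?_) (not_le.2 hdlam)
    refine eventually_log_norm_div_le_of_norm_sub_le hK'
      ((half_pos hlam).trans_le (le_max_right b _)) hd ?_
    exact hb.mono fun n hn => hn.trans (le_max_left _ _)
  · intro w hw
    obtain ⟨b, hb, hbw⟩ := exists_between hw
    exact ⟨b, hmem b hb, hbw⟩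

/-- Under an exponential dichotomy, the inhomogeneous equation with bounded forcing has a bounded
solution. -/
theorem ExpDichotomy.exists_bounded_solution {X : Type*} [NormedAddCommGroup X]
    [NormedSpace ℝ X] [CompleteSpace X] {A : ℤ → X →L[ℝ] X} (hA : ExpDichotomy A)
    {e : ℤ → X} {δ : ℝ} (he : ∀ n, ‖e n‖ ≤ δ) :
    ∃ (z : ℤ → X) (K : ℝ), (∀ n, ‖z n‖ ≤ K) ∧ ∀ n, z (n + 1) = A n (z n) + e n := by
  obtain ⟨E, P, C, lam, hC, hlam, hid, hstep, -, -, hs, hu⟩ := hA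
  let F : ℤ → ℤ → X := fun n j => (E n j).comp (P j) (e (j - 1))
  let G : ℤ → ℤ → X := fun n j =>
    (E n j).comp (ContinuousLinearMap.id ℝ X - P j) (e (j - 1))
  have hδ : 0 ≤ δ := (norm_nonneg _).trans (he 0)
  let w : ℕ → ℝ := fun k => C * Real.exp (-lam) ^ k * δ
  have hw : Summable w :=
    ((summable_geometric_of_lt_one (Real.exp_pos _).le
      (by simpa using hlam)).mul_left C).mul_right δ
  have hF : ∀ n (k : ℕ), ‖F n (n - k)‖ ≤ w k := by
    intro n k
    refine (ContinuousLinearMap.le_of_opNorm_le_of_le _ (hs n (n - k) (by lia)) (he _)).trans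
      (le_of_eq ?_)
    simp only [w, ← Real.exp_nat_mul]
    push_cast
    ring_nf
  have hG : ∀ n (k : ℕ), ‖G n (n + 1 + k)‖ ≤ w k := by
    intro n k
    refine (ContinuousLinearMap.le_of_opNorm_le_of_le _
      (hu n (n + 1 + k) (by lia)) (he _)).trans ?_
    simp only [w, ← Real.exp_nat_mul]
    gcongr C * Real.exp ?_ * δ
    push_cast
    nlinarith
  have hFs : ∀ n, Summable fun k : ℕ => F n (n - k) := fun n => hw.of_norm_bounded (hF n)
  have hGs : ∀ n, Summable fun k : ℕ => G n (n + 1 + k) := fun n => hw.of_norm_bounded (hG n)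
  have hAF : ∀ n j, A n (F n j) = F (n + 1) j := fun n j => by simp [F, hstep]
  have hAG : ∀ n j, A n (G n j) = G (n + 1) j := fun n j => by simp [G, hstep]
  have hFrec : ∀ n, ∑' k : ℕ, F (n + 1) (n + 1 - k) =
      P (n + 1) (e n) + A n (∑' k : ℕ, F n (n - k)) := by
    intro n
    rw [(hFs (n + 1)).tsum_eq_zero_add, (A n).map_tsum (hFs n)]
    congr 1
    · simp [F, hid]
    · refine tsum_congr fun k => ?_
      rw [hAF]
      congr 1
      push_cast
      ring
  have hGrec : ∀ n, A n (∑' k : ℕ, G n (n + 1 + k)) =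
      (e n - P (n + 1) (e n)) + ∑' k : ℕ, G (n + 1) (n + 1 + 1 + k) := by
    intro n
    have hsum : Summable fun k : ℕ => A n (G n (n + 1 + k)) := (A n).summable (hGs n)
    rw [(A n).map_tsum (hGs n), hsum.tsum_eq_zero_add]
    congr 1
    · rw [hAG]
      simp [G, hid]
    · refine tsum_congr fun k => ?_
      rw [hAG]
      congr 1
      push_cast
      ring
  refine ⟨fun n => ∑' k : ℕ, F n (n - k) - ∑' k : ℕ, G n (n + 1 + k),
    ∑' k, w k + ∑' k, w k, fun n => ?_, fun n => ?_⟩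
  · exact (norm_sub_le _ _).trans (add_le_add
      (tsum_of_norm_bounded hw.hasSum (hF n)) (tsum_of_norm_bounded hw.hasSum (hG n)))
  · simp only [map_sub, hFrec, hGrec]
    abel

/-- Preservation of positive Lyapunov exponents: a solution of the perturbed system with a
positive upper Lyapunov exponent is matched by a solution of the linear system with the
same exponent. -/
theorem preservation_of_positive_lyapunov_exponents {X : Type*} [NormedAddCommGroup X]
    [NormedSpace ℝ X] [CompleteSpace X]
    (A : ℤ → X ≃L[ℝ] X) (M : ℝ) (hM : ∀ m, ‖(A m : X →L[ℝ] X)‖ ≤ M)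
    (hED : ExpDichotomy fun m => (A m : X →L[ℝ] X))
    (c : ℝ) (hc : 0 < c)
    (hrobust : ∀ B : ℤ → X →L[ℝ] X,
      (∀ m, ‖(A m : X →L[ℝ] X) - B m‖ ≤ c) → ExpDichotomy B)
    (D r : ℝ) (hD : 0 < D) (hr : 0 < r) :
    ∃ δ > (0 : ℝ),
      ∀ (g : ℤ → X → X) (g' : ℤ → X → X →L[ℝ] X),
        (∀ n x, HasFDerivAt (g n) (g' n x) x) →
        (∀ n x, ‖g' n x‖ ≤ c / 2) →
        (∀ n x y, ‖g' n x - g' n y‖ ≤ D * ‖x - y‖ ^ r) →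
        (∀ n x, ‖g n x‖ ≤ δ) →
        ∀ (y : ℤ → X) (lam : ℝ),
          (∀ n, y (n + 1) = A n (y n) + g n (y n)) →
          Filter.limsup (fun n : ℤ => Real.log ‖y n‖ / (n : ℝ)) Filter.atTop = lam →
          0 < lam →
          ∃ x : ℤ → X, (∀ n, x (n + 1) = A n (x n)) ∧
            Filter.limsup (fun n : ℤ => Real.log ‖x n‖ / (n : ℝ)) Filter.atTop = lam := by
  refine ⟨1, one_pos, fun g g' _ _ _ hg y lam hy hlim hlam => ?_⟩
  obtain ⟨z, K, hzK, hz⟩ := hED.exists_bounded_solution (e := fun n => g n (y n))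
    fun n => hg n (y n)
  refine ⟨fun n => y n - z n, fun n => ?_, ?_⟩
  · simp only [hy, hz, map_sub, ContinuousLinearEquiv.coe_coe]
    abel
  · exact limsup_log_norm_div_eq_of_norm_sub_le (K := K)
      (fun n => by simpa using hzK n) hlam hlim
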